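/- Let d ≥ 2 be an integer and q ∈ K. Then the limit as n → ∞ of (1/dⁿ)·Σ log|ξ − q|, where the sum ranges over all roots ξ ≠ q of T_d⁽ⁿ⁾(X) − X in K counted with multiplicity (T_d the degree-d Chebyshev polynomial of the first kind, viewed in K[X] via its integer coefficients, and T_d⁽ⁿ⁾ its n-th iterate), exists and equals log⁺|2q| − log|2|, where log⁺ x = max{0, log x}. -/

import Mathlib

open Polynomial Filter

/-- The `n`-th compositional iterate of a polynomial, with `f⁽⁰⁾ = X`. -/
noncomputable def polyIter {K : Type*} [CommSemiring K] (f : K[X]) : ℕ → K[X]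
  | 0 => X
  | n + 1 => f.comp (polyIter f n)

/-!
Write `2q = z + z⁻¹` with `‖z‖ ≥ 1`. Then `zᴺ · 2(T_N(q) - q) = (zᴺ⁺¹ - 1)(zᴺ⁻¹ - 1)`, and the
sum of `log ‖ξ - q‖` over the roots `ξ ≠ q` of `T_N - X` is `log ‖c‖ - log ‖2ᴺ⁻¹‖`, where `c` is
the first nonzero Taylor coefficient of `T_N - X` at `q`. So everything reduces to
`log ‖zⁿ - 1‖ = n log ‖z‖ + o(n)`. This is clear for `‖z‖ > 1`. For `‖z‖ = 1`, if some power `zᵏ`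
is close to `1`, then `‖zᵏⁿ - 1‖ = ‖n‖ ‖zᵏ - 1‖`, and `log ‖n‖ = O(log n)` because at most one
prime has norm less than `1`. When `q` is itself a root, `c = T_N'(q) - 1`, and `T_N'(q)` is one of
`±N`, `N²`.
-/

open Asymptotics

section TrailingCoeff

theorem trailingCoeff_eq_coeff_one {R : Type*} [Semiring R] {f : R[X]} (h0 : f.coeff 0 = 0)
    (h1 : f.coeff 1 ≠ 0) : f.trailingCoeff = f.coeff 1 := by
  have hf : f ≠ 0 := by
    rintro rfl
    exact h1 (coeff_zero 1)
  have hdeg : f.natTrailingDegree = 1 :=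
    (natTrailingDegree_le_of_ne_zero h1).antisymm
      (le_natTrailingDegree hf fun m hm => by rwa [Nat.lt_one_iff.1 hm])
  rw [trailingCoeff, hdeg]

theorem trailingCoeff_taylor_of_eval_ne_zero {R : Type*} [Semiring R] {f : R[X]} {q : R}
    (h0 : f.eval q ≠ 0) : (taylor q f).trailingCoeff = f.eval q := by
  rw [← taylor_coeff_zero] at h0 ⊢
  exact trailingCoeff_eq_coeff_zero h0

theorem trailingCoeff_taylor_of_eval_eq_zero {R : Type*} [Semiring R] {f : R[X]} {q : R}
    (h0 : f.eval q = 0) (h1 : (derivative f).eval q ≠ 0) :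
    (taylor q f).trailingCoeff = (derivative f).eval q := by
  rw [← taylor_coeff_zero] at h0
  rw [← taylor_coeff_one] at h1 ⊢
  exact trailingCoeff_eq_coeff_one h0 h1

theorem trailingCoeff_taylor_prod_X_sub_C_ne_zero {R : Type*} [CommRing R] [Nontrivial R]
    (s : Multiset R) (q : R) : (taylor q (s.map (X - C ·)).prod).trailingCoeff ≠ 0 := by
  rw [trailingCoeff_nonzero_iff_nonzero, Ne, taylor_eq_zero]
  exact (monic_multiset_prod_of_monic _ _ fun ξ _ => monic_X_sub_C ξ).ne_zero

variable {K : Type*} [NormedField K]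

-- For `a = 0` the polynomial is `X` and both sides vanish, since `Real.log 0 = 0`.
theorem log_norm_trailingCoeff_X_sub_C (a : K) :
    Real.log ‖(X - C a).trailingCoeff‖ = Real.log ‖a‖ := by
  obtain rfl | ha := eq_or_ne a 0
  · simp [trailingCoeff]
  · rw [trailingCoeff_eq_coeff_zero] <;> simp [ha]

theorem log_norm_trailingCoeff_taylor_prod_X_sub_C (s : Multiset K) (q : K) :
    Real.log ‖(taylor q (s.map (X - C ·)).prod).trailingCoeff‖ =
      (s.map fun ξ => Real.log ‖ξ - q‖).sum := by
  induction s using Multiset.induction_on with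
  | empty => simp [trailingCoeff]
  | cons a s ih =>
    have hlin : taylor q (X - C a) = X - C (a - q) := by
      simp only [map_sub, taylor_X, taylor_C]
      ring
    have ha : (X - C (a - q)).trailingCoeff ≠ 0 :=
      trailingCoeff_nonzero_iff_nonzero.2 (X_sub_C_ne_zero _)
    rw [Multiset.map_cons, Multiset.prod_cons, Multiset.map_cons, Multiset.sum_cons, taylor_mul,
      hlin, trailingCoeff_mul, norm_mul,
      Real.log_mul (norm_ne_zero_iff.2 ha)
        (norm_ne_zero_iff.2 (trailingCoeff_taylor_prod_X_sub_C_ne_zero s q)),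
      log_norm_trailingCoeff_X_sub_C, ih]

theorem sum_log_norm_roots_sub_eq_log_trailingCoeff_taylor [DecidableEq K] {f : K[X]}
    (hf : f.Splits) (q : K) :
    ((f.roots.filter (· ≠ q)).map fun ξ => Real.log ‖ξ - q‖).sum =
      Real.log ‖(taylor q f).trailingCoeff‖ - Real.log ‖f.leadingCoeff‖ := by
  obtain rfl | hf0 := eq_or_ne f 0
  · simp
  have htaylor : (taylor q f).trailingCoeff =
      f.leadingCoeff * (taylor q (f.roots.map (X - C ·)).prod).trailingCoeff := by
    conv_lhs => rw [hf.eq_prod_roots, taylor_mul, taylor_C, trailingCoeff_mul]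
    simp [trailingCoeff]
  -- The roots equal to `q` contribute `Real.log 0 = 0`.
  have hfilter : ((f.roots.filter (· ≠ q)).map fun ξ => Real.log ‖ξ - q‖).sum =
      (f.roots.map fun ξ => Real.log ‖ξ - q‖).sum := by
    nth_rw 2 [← Multiset.filter_add_not (· ≠ q) f.roots]
    rw [Multiset.map_add, Multiset.sum_add, left_eq_add]
    refine Multiset.sum_eq_zero fun x hx => ?_
    obtain ⟨ξ, hξ, rfl⟩ := Multiset.mem_map.1 hx
    simp [not_not.1 (Multiset.mem_filter.1 hξ).2]
  rw [hfilter, htaylor, norm_mul,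
    Real.log_mul (norm_ne_zero_iff.2 (leadingCoeff_ne_zero.2 hf0))
      (norm_ne_zero_iff.2 (trailingCoeff_taylor_prod_X_sub_C_ne_zero _ q)),
    log_norm_trailingCoeff_taylor_prod_X_sub_C, add_sub_cancel_left]

end TrailingCoeff

section Ultrametric

variable {K : Type*} [NormedField K] [IsUltrametricDist K]

theorem norm_natCast_eq_one_of_coprime {m n : ℕ} (hmn : m.Coprime n) (hm : ‖(m : K)‖ < 1) :
    ‖(n : K)‖ = 1 := by
  obtain ⟨a, b, hab⟩ := Nat.isCoprime_iff_coprime.2 hmn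
  have hab' : (a : K) * m + b * n = 1 := by exact_mod_cast congrArg (Int.cast : ℤ → K) hab
  have ham : ‖(a : K) * m‖ < 1 := by
    rw [norm_mul]
    exact mul_lt_one_of_nonneg_of_lt_one_right
      (IsUltrametricDist.norm_intCast_le_one K a) (norm_nonneg _) hm
  refine (IsUltrametricDist.norm_natCast_le_one K n).antisymm ?_
  calc 1 = ‖(b : K) * n‖ := by
        have h := IsUltrametricDist.norm_add_eq_max_of_norm_ne_norm (x := (1 : K))
          (y := -((a : K) * m)) (by rw [norm_neg, norm_one]; exact ham.ne')
        rw [norm_neg, norm_one, max_eq_left ham.le] at h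
        rw [← h, ← hab']
        congr 1
        ring
    _ = ‖(b : K)‖ * ‖(n : K)‖ := norm_mul _ _
    _ ≤ ‖(n : K)‖ :=
        mul_le_of_le_one_left (norm_nonneg _) (IsUltrametricDist.norm_intCast_le_one K b)

variable (K) in
theorem exists_pos_le_norm_prime [CharZero K] :
    ∃ δ : ℝ, 0 < δ ∧ ∀ ℓ : ℕ, ℓ.Prime → δ ≤ ‖(ℓ : K)‖ := by
  by_cases h : ∃ p : ℕ, p.Prime ∧ ‖(p : K)‖ < 1
  · obtain ⟨p, hp, hp1⟩ := h
    refine ⟨‖(p : K)‖, norm_pos_iff.2 (Nat.cast_ne_zero.2 hp.ne_zero), fun ℓ hℓ => ?_⟩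
    obtain rfl | hne := eq_or_ne p ℓ
    · rfl
    · rw [norm_natCast_eq_one_of_coprime ((Nat.coprime_primes hp hℓ).2 hne) hp1]
      exact hp1.le
  · push Not at h
    exact ⟨1, one_pos, h⟩

variable (K) in
theorem exists_mul_log_le_log_norm_natCast [CharZero K] :
    ∃ c : ℝ, ∀ n : ℕ, c * Real.log n ≤ Real.log ‖(n : K)‖ := by
  obtain ⟨δ, hδ0, hδ⟩ := exists_pos_le_norm_prime K
  have hlog2 : 0 < Real.log 2 := Real.log_pos one_lt_two
  have hδ1 : Real.log δ ≤ 0 := Real.log_nonpos hδ0.le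
    ((hδ 2 Nat.prime_two).trans (IsUltrametricDist.norm_natCast_le_one K 2))
  refine ⟨Real.log δ / Real.log 2, fun n => ?_⟩
  induction n using Nat.recOnMul with
  | zero => simp
  | one => simp
  | prime ℓ hℓ =>
    have hℓ2 : Real.log 2 ≤ Real.log ℓ :=
      Real.log_le_log two_pos (by exact_mod_cast hℓ.two_le)
    calc Real.log δ / Real.log 2 * Real.log ℓ
        ≤ Real.log δ / Real.log 2 * Real.log 2 :=
          mul_le_mul_of_nonpos_left hℓ2 (div_nonpos_of_nonpos_of_nonneg hδ1 hlog2.le)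
      _ = Real.log δ := div_mul_cancel₀ _ hlog2.ne'
      _ ≤ Real.log ‖(ℓ : K)‖ := Real.log_le_log hδ0 (hδ ℓ hℓ)
  | mul a b iha ihb =>
    obtain rfl | ha := eq_or_ne a 0
    · simp
    obtain rfl | hb := eq_or_ne b 0
    · simp
    rw [Nat.cast_mul, Nat.cast_mul, norm_mul, Real.log_mul (by simpa) (by simpa),
      Real.log_mul (by simpa) (by simpa), mul_add]
    exact add_le_add iha ihb

variable (K) in
theorem isLittleO_log_norm_natCast [CharZero K] :
    (fun n : ℕ => Real.log ‖(n : K)‖) =o[atTop] fun n : ℕ => (n : ℝ) := by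
  obtain ⟨c, hc⟩ := exists_mul_log_le_log_norm_natCast K
  have hbound : (fun n : ℕ => Real.log ‖(n : K)‖) =O[atTop] fun n : ℕ => Real.log n := by
    refine IsBigO.of_bound |c| (Eventually.of_forall fun n => ?_)
    have hn : Real.log ‖(n : K)‖ ≤ 0 :=
      Real.log_nonpos (norm_nonneg _) (IsUltrametricDist.norm_natCast_le_one K n)
    rw [Real.norm_eq_abs, Real.norm_eq_abs, ← abs_mul]
    exact abs_le_abs_of_nonpos hn (hc n)
  exact hbound.trans_isLittleO (Real.isLittleO_log_id_atTop.natCast_atTop)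

theorem norm_geom_sum_le_one {w : K} (hw : ‖w‖ ≤ 1) (n : ℕ) :
    ‖∑ i ∈ Finset.range n, w ^ i‖ ≤ 1 :=
  IsUltrametricDist.norm_sum_le_of_forall_le_of_nonneg zero_le_one fun i _ => by
    rw [norm_pow]
    exact pow_le_one₀ (norm_nonneg w) hw

theorem norm_pow_sub_one_le {w : K} (hw : ‖w‖ ≤ 1) (n : ℕ) : ‖w ^ n - 1‖ ≤ ‖w - 1‖ := by
  rw [← geom_sum_mul, norm_mul]
  exact mul_le_of_le_one_left (norm_nonneg _) (norm_geom_sum_le_one hw n)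

theorem norm_geom_sum_sub_natCast_le {w : K} (hw : ‖w‖ ≤ 1) (n : ℕ) :
    ‖(∑ i ∈ Finset.range n, w ^ i) - n‖ ≤ ‖w - 1‖ := by
  have h : (∑ i ∈ Finset.range n, w ^ i) - n = ∑ i ∈ Finset.range n, (w ^ i - 1) := by simp
  rw [h]
  exact IsUltrametricDist.norm_sum_le_of_forall_le_of_nonneg (norm_nonneg _)
    fun i _ => norm_pow_sub_one_le hw i

theorem norm_pow_sub_one_eq_of_norm_sub_one_lt {w : K} {n : ℕ} (hw : ‖w‖ ≤ 1)
    (hwn : ‖w - 1‖ < ‖(n : K)‖) : ‖w ^ n - 1‖ = ‖(n : K)‖ * ‖w - 1‖ := by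
  have hlt := (norm_geom_sum_sub_natCast_le hw n).trans_lt hwn
  have hsum := IsUltrametricDist.norm_add_eq_max_of_norm_ne_norm hlt.ne
  rw [sub_add_cancel, max_eq_right hlt.le] at hsum
  rw [← geom_sum_mul, norm_mul, hsum]

theorem norm_pow_sub_one_eq_of_forall_prime {δ : ℝ} (hδ : ∀ ℓ : ℕ, ℓ.Prime → δ ≤ ‖(ℓ : K)‖)
    {w : K} (hw : ‖w‖ ≤ 1) (hwδ : ‖w - 1‖ < δ) (n : ℕ) :
    ‖w ^ n - 1‖ = ‖(n : K)‖ * ‖w - 1‖ := by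
  induction n using Nat.recOnMul generalizing w with
  | zero => simp
  | one => simp
  | prime ℓ hℓ => exact norm_pow_sub_one_eq_of_norm_sub_one_lt hw (hwδ.trans_le (hδ ℓ hℓ))
  | mul a b iha ihb =>
    have hwa : ‖w ^ a‖ ≤ 1 := by
      rw [norm_pow]
      exact pow_le_one₀ (norm_nonneg w) hw
    rw [pow_mul, ihb hwa ((norm_pow_sub_one_le hw a).trans_lt hwδ), iha hw hwδ, Nat.cast_mul,
      norm_mul]
    ring

theorem norm_natCast_le_norm_sub_one_of_pow_eq_one {w : K} (hw1 : w ≠ 1) {k : ℕ}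
    (hk : k ≠ 0) (hwk : w ^ k = 1) : ‖(k : K)‖ ≤ ‖w - 1‖ := by
  have hsum : ∑ i ∈ Finset.range k, w ^ i = 0 := by
    have h := geom_sum_mul w k
    rw [hwk, sub_self] at h
    exact (mul_eq_zero.1 h).resolve_right (sub_ne_zero.2 hw1)
  have hw : ‖w‖ = 1 := (isOfFinOrder_iff_pow_eq_one.2 ⟨k, hk.pos, hwk⟩).norm_eq_one
  simpa [hsum] using norm_geom_sum_sub_natCast_le hw.le k

theorem exists_pos_mul_norm_natCast_le_norm_pow_sub_one [CharZero K] {z : K} (hz : ‖z‖ = 1) :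
    ∃ c : ℝ, 0 < c ∧ ∀ n : ℕ, z ^ n ≠ 1 → c * ‖(n : K)‖ ≤ ‖z ^ n - 1‖ := by
  have hz_pow (n : ℕ) : ‖z ^ n‖ = 1 := by rw [norm_pow, hz, one_pow]
  obtain ⟨δ, hδ0, hδ⟩ := exists_pos_le_norm_prime K
  by_cases hclose : ∃ k : ℕ, k ≠ 0 ∧ ‖z ^ k - 1‖ < δ
  · obtain ⟨k, hk, hkδ⟩ := hclose
    by_cases htors : z ^ k = 1
    · refine ⟨‖(k : K)‖, norm_pos_iff.2 (Nat.cast_ne_zero.2 hk), fun n hn => ?_⟩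
      have hpow : (z ^ n) ^ k = 1 := by rw [pow_right_comm, htors, one_pow]
      calc ‖(k : K)‖ * ‖(n : K)‖
          ≤ ‖(k : K)‖ :=
            mul_le_of_le_one_right (norm_nonneg _) (IsUltrametricDist.norm_natCast_le_one K n)
        _ ≤ ‖z ^ n - 1‖ := norm_natCast_le_norm_sub_one_of_pow_eq_one hn hk hpow
    · refine ⟨‖z ^ k - 1‖, norm_pos_iff.2 (sub_ne_zero.2 htors), fun n _ => ?_⟩
      rw [mul_comm, ← norm_pow_sub_one_eq_of_forall_prime hδ (hz_pow k).le hkδ, pow_right_comm]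
      exact norm_pow_sub_one_le (hz_pow n).le k
  · push Not at hclose
    refine ⟨δ, hδ0, fun n hn => ?_⟩
    have hn0 : n ≠ 0 := by
      rintro rfl
      exact hn (pow_zero z)
    exact (mul_le_of_le_one_right hδ0.le (IsUltrametricDist.norm_natCast_le_one K n)).trans
      (hclose n hn0)

theorem norm_sub_one_of_one_lt_norm {w : K} (hw : 1 < ‖w‖) : ‖w - 1‖ = ‖w‖ := by
  rw [sub_eq_add_neg, IsUltrametricDist.norm_add_eq_max_of_norm_ne_norm] <;>
    simp [hw.le, hw.ne']

theorem isLittleO_log_norm_pow_sub_one_of_norm_eq_one [CharZero K] {z : K} (hz : ‖z‖ = 1) :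
    (fun n : ℕ => Real.log ‖z ^ n - 1‖) =o[atTop] fun n : ℕ => (n : ℝ) := by
  obtain ⟨c, hc0, hc⟩ := exists_pos_mul_norm_natCast_le_norm_pow_sub_one hz
  refine IsBigO.trans_isLittleO (IsBigO.of_bound 1 ?_)
    ((isLittleO_const_id_atTop |Real.log c|).natCast_atTop.add
      (isLittleO_log_norm_natCast K).norm_left)
  filter_upwards [eventually_ne_atTop 0] with n hn
  by_cases hzn : z ^ n = 1
  · simp [hzn]
  have hn0 : ‖(n : K)‖ ≠ 0 := norm_ne_zero_iff.2 (Nat.cast_ne_zero.2 hn)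
  have hlower : Real.log c + Real.log ‖(n : K)‖ ≤ Real.log ‖z ^ n - 1‖ := by
    rw [← Real.log_mul hc0.ne' hn0]
    exact Real.log_le_log (by positivity) (hc n hzn)
  have hupper : Real.log ‖z ^ n - 1‖ ≤ 0 :=
    Real.log_nonpos (norm_nonneg _)
      (by simpa [hz, sub_eq_add_neg] using IsUltrametricDist.norm_add_le_max (z ^ n) (-1))
  calc ‖Real.log ‖z ^ n - 1‖‖ ≤ |Real.log c + Real.log ‖(n : K)‖| :=
        abs_le_abs_of_nonpos hupper hlower
    _ ≤ |Real.log c| + |Real.log ‖(n : K)‖| := abs_add_le _ _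
    _ ≤ 1 * ‖|Real.log c| + ‖Real.log ‖(n : K)‖‖‖ := by rw [one_mul]; exact le_abs_self _

theorem isLittleO_log_norm_pow_sub_one [CharZero K] {z : K} (hz : 1 ≤ ‖z‖) :
    (fun n : ℕ => Real.log ‖z ^ n - 1‖ - n * Real.log ‖z‖) =o[atTop] fun n : ℕ => (n : ℝ) := by
  obtain hz | hz := hz.eq_or_lt'
  · simpa [hz] using isLittleO_log_norm_pow_sub_one_of_norm_eq_one hz
  · refine IsLittleO.congr' (isLittleO_zero _ _) ?_ .rfl
    filter_upwards [eventually_ne_atTop 0] with n hn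
    have hzn : 1 < ‖z ^ n‖ := by
      rw [norm_pow]
      exact one_lt_pow₀ hz hn
    rw [norm_sub_one_of_one_lt_norm hzn, norm_pow, Real.log_pow, sub_self]

theorem posLog_norm_add_inv {z : K} (hz : 1 ≤ ‖z‖) :
    Real.posLog ‖z + z⁻¹‖ = Real.log ‖z‖ := by
  obtain hz | hz := hz.eq_or_lt'
  · rw [hz, Real.log_one, Real.posLog_eq_zero_iff, abs_norm]
    simpa [hz] using IsUltrametricDist.norm_add_le_max z z⁻¹
  · have hinv : ‖z⁻¹‖ < ‖z‖ := by
      rw [norm_inv]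
      exact (inv_lt_one_of_one_lt₀ hz).trans hz
    rw [IsUltrametricDist.norm_add_eq_max_of_norm_ne_norm hinv.ne', max_eq_left hinv.le,
      Real.posLog_eq_log (by rw [abs_norm]; exact hz.le)]

end Ultrametric

section Chebyshev

theorem polyIter_chebyshev_T {R : Type*} [CommRing R] (d n : ℕ) :
    polyIter (Chebyshev.T R d) n = Chebyshev.T R ((d ^ n : ℕ) : ℤ) := by
  induction n with
  | zero => simp [polyIter]
  | succ n ih => rw [polyIter, ih, ← Chebyshev.T_mul, ← Nat.cast_mul, pow_succ']

theorem two_mul_chebyshev_T_eval {R : Type*} [CommRing R] {x y q : R} (hxy : x * y = 1)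
    (hq : 2 * q = x + y) (n : ℕ) : 2 * (Chebyshev.T R n).eval q = x ^ n + y ^ n := by
  have h := congrArg (eval q) (Chebyshev.C_comp_two_mul_X R n)
  rw [← dickson_one_one_eval_add_inv x y hxy, dickson_one_one_eq_chebyshev_C, ← hq]
  simpa [eval_comp] using h.symm

theorem pow_mul_two_mul_chebyshev_T_eval_sub {R : Type*} [CommRing R] {x y q : R}
    (hxy : x * y = 1) (hq : 2 * q = x + y) (n : ℕ) :
    x ^ (n + 1) * (2 * ((Chebyshev.T R (n + 1 : ℕ)).eval q - q)) =
      (x ^ n - 1) * (x ^ (n + 2) - 1) := by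
  have hpow : x ^ (n + 1) * y ^ (n + 1) = 1 := by rw [← mul_pow, hxy, one_pow]
  linear_combination
    x ^ (n + 1) * (two_mul_chebyshev_T_eval hxy hq (n + 1) - hq) + hpow - x ^ n * hxy

theorem chebyshev_T_sq_add_one_sub_X_sq_mul_U_sq (R : Type*) [CommRing R] (n : ℤ) :
    Chebyshev.T R n ^ 2 + (1 - X ^ 2) * Chebyshev.U R (n - 1) ^ 2 = 1 := by
  have hS := congrArg (·.comp (2 * X)) (Chebyshev.S_sq_add_S_sq R (n - 1))
  simp only [sub_add_cancel, sub_comp, add_comp, mul_comp, pow_comp, X_comp, one_comp,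
    Chebyshev.S_comp_two_mul_X] at hS
  rw [Chebyshev.T_eq_U_sub_X_mul_U]
  linear_combination hS

theorem derivative_chebyshev_T_eval_of_eval_eq_self {R : Type*} [CommRing R] [IsDomain R] {n : ℤ}
    {q : R} (hq : (Chebyshev.T R n).eval q = q) :
    (derivative (Chebyshev.T R n)).eval q = n ∨ (derivative (Chebyshev.T R n)).eval q = -n ∨
      (derivative (Chebyshev.T R n)).eval q = n ^ 2 := by
  set u := (Chebyshev.U R (n - 1)).eval q with hu
  have hderiv : (derivative (Chebyshev.T R n)).eval q = n * u := by
    simp [Chebyshev.T_derivative_eq_U, hu]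
  have hpell := congrArg (eval q) (chebyshev_T_sq_add_one_sub_X_sq_mul_U_sq R n)
  simp only [eval_add, eval_mul, eval_sub, eval_pow, eval_X, eval_one, hq, ← hu] at hpell
  have hfactor : (u - 1) * ((u + 1) * ((q - 1) * (q + 1))) = 0 := by linear_combination -hpell
  simp only [mul_eq_zero, sub_eq_zero, ← eq_neg_iff_add_eq_zero] at hfactor
  obtain hu1 | hu1 | rfl | rfl := hfactor
  · exact .inl (by rw [hderiv, hu1, mul_one])
  · exact .inr (.inl (by rw [hderiv, hu1, mul_neg_one]))
  · exact .inr (.inr (Chebyshev.derivative_T_eval_one n))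
  · rw [Chebyshev.T_eval_neg_one] at hq
    rw [Chebyshev.U_eval_neg_one, Int.negOnePow_sub] at hu
    refine .inr (.inr ?_)
    rw [hderiv, hu]
    push_cast
    rw [hq]
    simp only [Int.negOnePow_one, Units.val_neg, Units.val_one, Int.cast_neg, Int.cast_one]
    ring

theorem leadingCoeff_chebyshev_T_sub_X {R : Type*} [CommRing R] [IsDomain R] [NeZero (2 : R)]
    {n : ℕ} (hn : 2 ≤ n) : (Chebyshev.T R n - X).leadingCoeff = 2 ^ (n - 1) := by
  rw [leadingCoeff_sub_of_degree_lt, Chebyshev.leadingCoeff_T, Int.natAbs_natCast]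
  rw [Chebyshev.degree_T, degree_X, Int.natAbs_natCast]
  exact_mod_cast hn

end Chebyshev

section Equidistribution

theorem exists_ne_zero_add_inv_eq {K : Type*} [Field K] [IsAlgClosed K] (a : K) :
    ∃ z : K, z ≠ 0 ∧ z + z⁻¹ = a := by
  have hdeg : (X ^ 2 - C a * X + 1 : K[X]).degree = 2 := by compute_degree!
  obtain ⟨z, hz⟩ := IsAlgClosed.exists_root (X ^ 2 - C a * X + 1 : K[X]) (by simp [hdeg])
  simp only [IsRoot, eval_add, eval_sub, eval_mul, eval_pow, eval_X, eval_C, eval_one] at hz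
  have hz0 : z ≠ 0 := by
    rintro rfl
    simp at hz
  refine ⟨z, hz0, ?_⟩
  field_simp
  linear_combination hz

theorem exists_one_le_norm_add_inv_eq {K : Type*} [NormedField K] [IsAlgClosed K] (a : K) :
    ∃ z : K, 1 ≤ ‖z‖ ∧ z + z⁻¹ = a := by
  obtain ⟨z, hz0, hz⟩ := exists_ne_zero_add_inv_eq a
  obtain h | h := le_total 1 ‖z‖
  · exact ⟨z, h, hz⟩
  · refine ⟨z⁻¹, ?_, by rw [inv_inv, add_comm, hz]⟩
    rw [norm_inv]
    exact (one_le_inv₀ (norm_pos_iff.2 hz0)).2 h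

theorem isLittleO_comp_add_natCast {f : ℕ → ℝ} (hf : f =o[atTop] fun n : ℕ => (n : ℝ)) (k : ℕ) :
    (fun n => f (n + k)) =o[atTop] fun n : ℕ => (n : ℝ) := by
  refine (hf.comp_tendsto (tendsto_add_atTop_nat k)).trans_isBigO ?_
  have hk := (isLittleO_const_id_atTop (k : ℝ)).natCast_atTop.isBigO
  simpa [Function.comp_def] using (isBigO_refl _ _).add hk

theorem tendsto_div_of_isLittleO_succ_sub {f : ℕ → ℝ} {c : ℝ}
    (hf : (fun n : ℕ => f (n + 1) - (n + 1) * c) =o[atTop] fun n : ℕ => (n : ℝ)) :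
    Tendsto (fun n : ℕ => f n / n) atTop (nhds c) := by
  have hsucc : (fun n : ℕ => (n : ℝ)) =O[atTop] fun n : ℕ => (n : ℝ) + 1 :=
    IsBigO.of_norm_le fun n => by
      rw [Real.norm_natCast]
      exact le_add_of_nonneg_right zero_le_one
  rw [← tendsto_add_atTop_iff_nat 1]
  have hlim := (hf.trans_isBigO hsucc).tendsto_div_nhds_zero.add_const c
  rw [zero_add] at hlim
  refine hlim.congr fun n => ?_
  push_cast
  field_simp
  ring

variable {K : Type*} [NormedField K]

theorem norm_eq_one_of_chebyshev_T_eval_eq_self {z q : K} (hz : z ≠ 0) (hzq : z + z⁻¹ = 2 * q)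
    {n : ℕ} (hn : n ≠ 0) (hq : (Chebyshev.T K (n + 1 : ℕ)).eval q = q) : ‖z‖ = 1 := by
  have hfactor := pow_mul_two_mul_chebyshev_T_eval_sub (mul_inv_cancel₀ hz) hzq.symm n
  rw [hq, sub_self, mul_zero, mul_zero, eq_comm, mul_eq_zero, sub_eq_zero, sub_eq_zero] at hfactor
  have hfin : IsOfFinOrder z := by
    rw [isOfFinOrder_iff_pow_eq_one]
    exact hfactor.elim (⟨n, hn.pos, ·⟩) (⟨n + 2, by positivity, ·⟩)
  exact hfin.norm_eq_one

theorem log_norm_trailingCoeff_taylor_chebyshev_of_eval_ne [NeZero (2 : K)] {z q : K}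
    (hz : z ≠ 0) (hzq : z + z⁻¹ = 2 * q) {n : ℕ} (hq : (Chebyshev.T K (n + 1 : ℕ)).eval q ≠ q) :
    Real.log ‖(taylor q (Chebyshev.T K (n + 1 : ℕ) - X)).trailingCoeff‖ =
      Real.log ‖z ^ n - 1‖ + Real.log ‖z ^ (n + 2) - 1‖ - (n + 1) * Real.log ‖z‖
        - Real.log ‖(2 : K)‖ := by
  have heval : (Chebyshev.T K (n + 1 : ℕ) - X).eval q ≠ 0 := by simpa [sub_eq_zero] using hq
  have hfactor := pow_mul_two_mul_chebyshev_T_eval_sub (mul_inv_cancel₀ hz) hzq.symm n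
  have hleft : z ^ (n + 1) * (2 * ((Chebyshev.T K (n + 1 : ℕ)).eval q - q)) ≠ 0 :=
    mul_ne_zero (pow_ne_zero _ hz) (mul_ne_zero two_ne_zero (sub_ne_zero.2 hq))
  have hright : (z ^ n - 1) * (z ^ (n + 2) - 1) ≠ 0 := hfactor ▸ hleft
  rw [trailingCoeff_taylor_of_eval_ne_zero heval, eval_sub, eval_X]
  have hlog := congrArg (Real.log ‖·‖) hfactor
  simp only [norm_mul] at hlog
  rw [← norm_ne_zero_iff, norm_mul, mul_ne_zero_iff] at hleft hright
  rw [norm_mul, mul_ne_zero_iff] at hleft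
  rw [Real.log_mul hleft.1 (mul_ne_zero hleft.2.1 hleft.2.2), Real.log_mul hleft.2.1 hleft.2.2,
    Real.log_mul hright.1 hright.2, norm_pow, Real.log_pow] at hlog
  push_cast at hlog ⊢
  linear_combination hlog

variable [CharZero K]

theorem abs_log_norm_trailingCoeff_taylor_chebyshev_le_of_eval_eq {q : K} {n : ℕ} (hn : n ≠ 0)
    (hq : (Chebyshev.T K (n + 1 : ℕ)).eval q = q) :
    |Real.log ‖(taylor q (Chebyshev.T K (n + 1 : ℕ) - X)).trailingCoeff‖| ≤
      |Real.log ‖(n : K)‖| + |Real.log ‖((n + 2 : ℕ) : K)‖| := by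
  have hn0 : (n : K) ≠ 0 := Nat.cast_ne_zero.2 hn
  have hn2 : ((n + 2 : ℕ) : K) ≠ 0 := Nat.cast_ne_zero.2 (by positivity)
  have heval : (Chebyshev.T K (n + 1 : ℕ) - X).eval q = 0 := by simpa [sub_eq_zero] using hq
  have hcases : (derivative (Chebyshev.T K (n + 1 : ℕ) - X)).eval q = n ∨
      (derivative (Chebyshev.T K (n + 1 : ℕ) - X)).eval q = -(n + 2 : ℕ) ∨
      (derivative (Chebyshev.T K (n + 1 : ℕ) - X)).eval q = n * (n + 2 : ℕ) := by
    rw [derivative_sub, derivative_X, eval_sub, eval_one]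
    refine (derivative_chebyshev_T_eval_of_eval_eq_self hq).imp ?_ (Or.imp ?_ ?_) <;>
      (intro h; rw [h]; push_cast; ring)
  have hderiv : (derivative (Chebyshev.T K (n + 1 : ℕ) - X)).eval q ≠ 0 := by
    obtain h | h | h := hcases <;> rw [h]
    exacts [hn0, neg_ne_zero.2 hn2, mul_ne_zero hn0 hn2]
  rw [trailingCoeff_taylor_of_eval_eq_zero heval hderiv]
  obtain h | h | h := hcases <;> rw [h]
  · exact le_add_of_nonneg_right (abs_nonneg _)
  · rw [norm_neg]
    exact le_add_of_nonneg_left (abs_nonneg _)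
  · rw [norm_mul, Real.log_mul (norm_ne_zero_iff.2 hn0) (norm_ne_zero_iff.2 hn2)]
    exact abs_add_le _ _

variable [IsUltrametricDist K]

theorem isLittleO_log_norm_trailingCoeff_taylor_chebyshev {z q : K} (hz : 1 ≤ ‖z‖)
    (hzq : z + z⁻¹ = 2 * q) :
    (fun n : ℕ => Real.log ‖(taylor q (Chebyshev.T K (n + 1 : ℕ) - X)).trailingCoeff‖ -
      (n + 1) * Real.log ‖z‖) =o[atTop] fun n : ℕ => (n : ℝ) := by
  have hz0 : z ≠ 0 := norm_pos_iff.1 (one_pos.trans_le hz)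
  set e : ℕ → ℝ := fun n => Real.log ‖z ^ n - 1‖ - n * Real.log ‖z‖ with he_def
  have he : e =o[atTop] fun n : ℕ => (n : ℝ) := isLittleO_log_norm_pow_sub_one hz
  have hv := isLittleO_log_norm_natCast K
  have hnonroot : (fun n => |e n + e (n + 2) - Real.log ‖(2 : K)‖|) =o[atTop]
      fun n : ℕ => (n : ℝ) :=
    ((he.add (isLittleO_comp_add_natCast he 2)).sub
      (isLittleO_const_id_atTop _).natCast_atTop).norm_left
  have hroot : (fun n : ℕ => |Real.log ‖(n : K)‖| + |Real.log ‖((n + 2 : ℕ) : K)‖|) =o[atTop]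
      fun n : ℕ => (n : ℝ) :=
    hv.norm_left.add (isLittleO_comp_add_natCast hv 2).norm_left
  refine (IsBigO.of_bound' ?_).trans_isLittleO (hnonroot.add hroot)
  filter_upwards [eventually_ne_atTop 0] with n hn
  refine le_trans ?_ (le_abs_self _)
  by_cases hq : (Chebyshev.T K (n + 1 : ℕ)).eval q = q
  · rw [norm_eq_one_of_chebyshev_T_eval_eq_self hz0 hzq hn hq, Real.log_one, mul_zero, sub_zero]
    exact (abs_log_norm_trailingCoeff_taylor_chebyshev_le_of_eval_eq hn hq).trans
      (le_add_of_nonneg_left (abs_nonneg _))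
  · refine le_of_eq_of_le ?_ (le_add_of_nonneg_right (by positivity))
    rw [log_norm_trailingCoeff_taylor_chebyshev_of_eval_ne hz0 hzq hq, Real.norm_eq_abs, he_def]
    congr 1
    push_cast
    ring

variable [IsAlgClosed K]

theorem tendsto_log_norm_trailingCoeff_taylor_chebyshev_div (q : K) :
    Tendsto (fun n : ℕ => Real.log ‖(taylor q (Chebyshev.T K n - X)).trailingCoeff‖ / n) atTop
      (nhds (Real.posLog ‖2 * q‖)) := by
  obtain ⟨z, hz, hzq⟩ := exists_one_le_norm_add_inv_eq (2 * q)
  rw [← hzq, posLog_norm_add_inv hz]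
  exact tendsto_div_of_isLittleO_succ_sub (isLittleO_log_norm_trailingCoeff_taylor_chebyshev hz hzq)

theorem tendsto_sum_log_norm_roots_chebyshev_T_sub_X [DecidableEq K] (q : K) :
    Tendsto (fun n : ℕ => (1 / (n : ℝ)) *
        (((Chebyshev.T K n - X).roots.filter (· ≠ q)).map fun ξ => Real.log ‖ξ - q‖).sum)
      atTop (nhds (Real.posLog ‖2 * q‖ - Real.log ‖(2 : K)‖)) := by
  have hlead : Tendsto (fun n : ℕ => ((n : ℝ) - 1) * Real.log ‖(2 : K)‖ / n) atTop
      (nhds (Real.log ‖(2 : K)‖)) := by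
    refine tendsto_div_of_isLittleO_succ_sub
      ((isLittleO_const_id_atTop (-Real.log ‖(2 : K)‖)).natCast_atTop.congr_left fun n => ?_)
    push_cast
    ring
  refine ((tendsto_log_norm_trailingCoeff_taylor_chebyshev_div q).sub hlead).congr' ?_
  filter_upwards [eventually_ge_atTop 2] with n hn
  rw [sum_log_norm_roots_sub_eq_log_trailingCoeff_taylor (IsAlgClosed.splits _),
    leadingCoeff_chebyshev_T_sub_X hn, norm_pow, Real.log_pow, Nat.cast_sub (by lia), Nat.cast_one]
  ring

end Equidistribution

theorem stmt15_general {K : Type*} [NormedField K] [IsUltrametricDist K] [IsAlgClosed K]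
    [CharZero K] [DecidableEq K] (d : ℕ) (hd : 2 ≤ d) (q : K) :
    Tendsto (fun n : ℕ =>
        (1 / (d : ℝ) ^ n) *
          (((polyIter (Polynomial.Chebyshev.T K d) n - X).roots.filter (fun ξ => ξ ≠ q)).map
            (fun ξ => Real.log ‖ξ - q‖)).sum)
      atTop (nhds (max 0 (Real.log ‖2 * q‖) - Real.log ‖(2 : K)‖)) := by
  simpa only [Function.comp_def, polyIter_chebyshev_T, Nat.cast_pow, Real.posLog_apply] using
    (tendsto_sum_log_norm_roots_chebyshev_T_sub_X q).comp (tendsto_pow_atTop_atTop_of_one_lt hd)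

/-- for the degree-`d` Chebyshev polynomial `T_d` (`d ≥ 2`) viewed over an
algebraically closed complete nonarchimedean field `K` extending `ℚ_p`, and `q ∈ K`, the
averaged sum of `log‖ξ - q‖` over the roots `ξ ≠ q` of `T_d⁽ⁿ⁾ - X` (with multiplicity)
converges to `log⁺‖2q‖ - log‖2‖`. -/
theorem stmt15 {K : Type*} [NormedField K] [IsUltrametricDist K] [CompleteSpace K]
    [IsAlgClosed K] [CharZero K] [DecidableEq K]
    (p : ℕ) (hp : p.Prime) (hpK : ‖(p : K)‖ = (p : ℝ)⁻¹)
    (d : ℕ) (hd : 2 ≤ d) (q : K) :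
    Tendsto (fun n : ℕ =>
        (1 / (d : ℝ) ^ n) *
          (((polyIter (Polynomial.Chebyshev.T K d) n - X).roots.filter (fun ξ => ξ ≠ q)).map
            (fun ξ => Real.log ‖ξ - q‖)).sum)
      atTop (nhds (max 0 (Real.log ‖2 * q‖) - Real.log ‖(2 : K)‖)) :=
  stmt15_general d hd q
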